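/- Let k_P > 0 and k_D > 0 be scalar gains, let R_d ∈ SO(3) be a constant desired attitude with desired angular velocity ω_d = 0, and consider the closed-loop attitude dynamics on SO(3) × ℝ³ given by Ṙ(t) = S(ω(t)) R(t) and ω̇(t) = R(t) · ᴮω̇*(t), where ᴮω(t) := R(t)ᵀ ω(t) and ᴮω̇* := −k_P k_D skew(R_dᵀ R)∨ − k_D ᴮω − k_P skew(R_dᵀ R S(ᴮω))∨. Then the equilibrium (R, ω) = (R_d, 0) is quasi-globally asymptotically stable: (i) it is Lyapunov stable (for every neighborhood U of (R_d, 0) there is a neighborhood V of (R_d, 0) such that every solution starting in V remains in U for all t ≥ 0), and (ii) there exists a closed set N ⊆ SO(3) × ℝ³, with empty interior and of measure zero with respect to the product of the Haar measure on SO(3) and Lebesgue measure on ℝ³, such that every solution with initial condition (R(0), ω(0)) ∉ N satisfies R(t) → R_d and ω(t) → 0 as t → ∞. -/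

import Mathlib

open Matrix MeasureTheory Filter Topology

noncomputable section

attribute [local instance] Matrix.normedAddCommGroup Matrix.normedSpace

/-- The space of real 3×3 matrices. -/
abbrev M3 := Matrix (Fin 3) (Fin 3) ℝ

/-- Vectors in ℝ³. -/
abbrev V3 := Fin 3 → ℝ

local instance : MeasurableSpace M3 :=
  (inferInstance : MeasurableSpace (Fin 3 → Fin 3 → ℝ))

/-- The skew-symmetric matrix `S a` associated with the cross product,
i.e. `S a *ᵥ b = a × b`. -/
def S (a : V3) : M3 :=
  !![0, -a 2, a 1;
     a 2, 0, -a 0;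
     -a 1, a 0, 0]

/-- The vee operator, inverse of `S` on skew-symmetric matrices. -/
def vee (A : M3) : V3 := ![A 2 1, A 0 2, A 1 0]

/-- `skew(A) = ½(A − Aᵀ)`. -/
def skewPart (A : M3) : M3 := (1 / 2 : ℝ) • (A - Aᵀ)

/-- SO(3): real 3×3 matrices `R` with `Rᵀ * R = 1` and `det R = 1`. -/
def SO3 : Set M3 := {R | Rᵀ * R = 1 ∧ R.det = 1}

/-- The body-frame commanded angular acceleration for a constant desired attitude `R_d`
with desired angular velocity `ω_d = 0`:
`ᴮω̇* = −k_P k_D skew(R_dᵀ R)∨ − k_D ᴮω − k_P skew(R_dᵀ R S(ᴮω))∨`,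
where `ᴮω = Rᵀ ω`. -/
def bodyCmd (kP kD : ℝ) (Rd R : M3) (ω : V3) : V3 :=
  (-(kP * kD)) • vee (skewPart (Rdᵀ * R))
    - kD • (Rᵀ *ᵥ ω)
    - kP • vee (skewPart (Rdᵀ * R * S (Rᵀ *ᵥ ω)))

/-- `(R, ω)` is a (forward-time) solution of the closed-loop attitude dynamics
`Ṙ(t) = S(ω(t)) R(t)`, `ω̇(t) = R(t) ᴮω̇*(t)`. -/
def IsClosedLoopSolution (kP kD : ℝ) (Rd : M3) (R : ℝ → M3) (ω : ℝ → V3) : Prop :=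
  (∀ t : ℝ, 0 ≤ t → HasDerivAt R (S (ω t) * R t) t) ∧
  (∀ t : ℝ, 0 ≤ t → HasDerivAt ω (R t *ᵥ bodyCmd kP kD Rd (R t) (ω t)) t)

/-- `μ` is the (normalized, left-invariant) Haar measure of the compact group SO(3),
viewed as a measure on the ambient matrix space carried by the set `SO3`. -/
def IsHaarOnSO3 (μ : Measure M3) : Prop :=
  μ SO3 = 1 ∧ μ SO3ᶜ = 0 ∧
  ∀ Q ∈ SO3, ∀ s : Set M3, MeasurableSet s → μ ((fun R => Q * R) ⁻¹' s) = μ s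

/-!
Let `E = Rdᵀ R` be the attitude error, `b = Rᵀ ω` the body angular velocity and
`z = b + kP skew(E)∨`. The control law is designed so that `ż = -kD z` along solutions. A unit
quaternion `q` of `E` satisfies `q̇ = A(b) q` with `A(b) q = ½ q b`, and since
`A(skew(E)∨) q = q₀² q - q₀ e₀`, this reads `q̇ = A(z) q + kP q₀ e₀ - kP q₀² q`. Up to the scalar
factor `q₀²` in the last term the equation is linear in `q`, with coefficients depending on `z`.
After normalization, the adjoint linear equation has an explicit solution `p(z)` with `p(0) = e₀`,
whose components are built from confluent hypergeometric functions `₀F₁` of `-‖z‖² / (16 kD²)`.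

Hence `w = ⟨q, p(z)⟩²` satisfies `ẇ = 2 kP (1 - τ) w` with `τ = q₀² = (1 + tr E) / 4 ≤ 1`, while
`w - τ → 0` because `z → 0`. So `w` is nondecreasing, which gives stability, and `τ → 1` as soon as
`w(0) ≠ 0`. For a fixed attitude, the initial velocities with `w(0) = 0` form the zero set of a
nonzero real-analytic function, so the exceptional set has null slices.
-/

section Hypergeometric

open FormalMultilinearSeries Polynomial
open scoped Nat

variable {𝕜 : Type*} [RCLike 𝕜]

/-- Coefficients of the confluent hypergeometric limit function `₀F₁(a; ·)`. -/
def hypergeometric01Coeff (a : 𝕜) (n : ℕ) : 𝕜 := ((n ! : 𝕜) * (ascPochhammer 𝕜 n).eval a)⁻¹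

/-- The confluent hypergeometric limit function `₀F₁(a; x) = ∑ xⁿ / (n! (a)ₙ)`, that is, a Bessel
function up to normalization. It takes junk values if `a` is a nonpositive integer. -/
def hypergeometric01 (a x : 𝕜) : 𝕜 := ofScalarsSum (hypergeometric01Coeff a) x

theorem hypergeometric01Coeff_zero (a : 𝕜) : hypergeometric01Coeff a 0 = 1 := by
  simp [hypergeometric01Coeff]

theorem hypergeometric01_zero (a : 𝕜) : hypergeometric01 a 0 = 1 := by
  simp [hypergeometric01, hypergeometric01Coeff_zero]

theorem hypergeometric01Coeff_succ (a : 𝕜) (n : ℕ) :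
    hypergeometric01Coeff a (n + 1) = hypergeometric01Coeff a n * ((n + 1) * (a + n))⁻¹ := by
  simp only [hypergeometric01Coeff, Nat.factorial_succ, ascPochhammer_succ_eval, ← mul_inv]
  push_cast
  ring

theorem succ_mul_hypergeometric01Coeff_succ (a : 𝕜) (n : ℕ) :
    (n + 1) * hypergeometric01Coeff a (n + 1) = a⁻¹ * hypergeometric01Coeff (a + 1) n := by
  have hn : (n + 1 : 𝕜) ≠ 0 := n.cast_add_one_ne_zero
  simp only [hypergeometric01Coeff, Nat.factorial_succ, ascPochhammer_succ_left, eval_mul, eval_X,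
    eval_comp, eval_add, eval_one, Nat.cast_mul, Nat.cast_add, Nat.cast_one]
  field_simp

variable {a : 𝕜}

theorem hypergeometric01Coeff_ne_zero (ha : ∀ n : ℕ, a + n ≠ 0) (n : ℕ) :
    hypergeometric01Coeff a n ≠ 0 := by
  induction n with
  | zero => simp [hypergeometric01Coeff]
  | succ n ih =>
    rw [hypergeometric01Coeff_succ]
    exact mul_ne_zero ih (inv_ne_zero (mul_ne_zero n.cast_add_one_ne_zero (ha n)))

theorem radius_hypergeometric01 (ha : ∀ n : ℕ, a + n ≠ 0) :
    (ofScalars 𝕜 (hypergeometric01Coeff a)).radius = ⊤ := by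
  refine ofScalars_radius_eq_top_of_tendsto 𝕜 _
    (.of_forall (hypergeometric01Coeff_ne_zero ha)) ?_
  have ratio (n : ℕ) : ‖hypergeometric01Coeff a n.succ‖ / ‖hypergeometric01Coeff a n‖ =
      ‖((n + 1 : 𝕜))⁻¹‖ * ‖(a + n)⁻¹‖ := by
    rw [Nat.succ_eq_add_one, hypergeometric01Coeff_succ, norm_mul,
      mul_div_cancel_left₀ _ (norm_ne_zero_iff.2 (hypergeometric01Coeff_ne_zero ha n)), mul_inv,
      norm_mul]
  have tendsto_inv (b : 𝕜) : Tendsto (fun n : ℕ => ‖(b + n)⁻¹‖) atTop (𝓝 0) := by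
    have hcob := (tendsto_const_add_cobounded b).comp (tendsto_natCast_atTop_cobounded (α := 𝕜))
    simpa [Function.comp_def] using (tendsto_inv₀_cobounded.comp hcob).norm
  simp_rw [ratio]
  simpa [add_comm] using (tendsto_inv 1).mul (tendsto_inv a)

theorem hasFPowerSeriesOnBall_hypergeometric01 (ha : ∀ n : ℕ, a + n ≠ 0) :
    HasFPowerSeriesOnBall (hypergeometric01 a) (ofScalars 𝕜 (hypergeometric01Coeff a)) 0 ⊤ := by
  have := (ofScalars 𝕜 (hypergeometric01Coeff a)).hasFPowerSeriesOnBall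
    (by simp [radius_hypergeometric01 ha])
  rwa [radius_hypergeometric01 ha] at this

theorem analyticOnNhd_hypergeometric01 (ha : ∀ n : ℕ, a + n ≠ 0) :
    AnalyticOnNhd 𝕜 (hypergeometric01 a) Set.univ := by
  simpa using (hasFPowerSeriesOnBall_hypergeometric01 ha).analyticOnNhd

theorem hasSum_hypergeometric01 (ha : ∀ n : ℕ, a + n ≠ 0) (x : 𝕜) :
    HasSum (fun n => hypergeometric01Coeff a n * x ^ n) (hypergeometric01 a x) := by
  simpa [mul_comm] using (hasFPowerSeriesOnBall_hypergeometric01 ha).hasSum_sub (y := x) (by simp)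

theorem add_one_add_natCast_ne_zero (ha : ∀ n : ℕ, a + n ≠ 0) (n : ℕ) : a + 1 + n ≠ 0 := by
  simpa [add_assoc, add_comm, add_left_comm] using ha (n + 1)

theorem hasDerivAt_hypergeometric01 (ha : ∀ n : ℕ, a + n ≠ 0) (x : 𝕜) :
    HasDerivAt (hypergeometric01 a) (hypergeometric01 (a + 1) x / a) x := by
  have hser := hasFPowerSeriesOnBall_hypergeometric01 ha
  have hderiv := (hser.fderiv.hasSum_sub (y := x) (by simp)).mapL (ContinuousLinearMap.apply 𝕜 𝕜 1)
  have hshift : HasSum (fun n => a⁻¹ * (hypergeometric01Coeff (a + 1) n * x ^ n))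
      (deriv (hypergeometric01 a) x) := by
    simpa [← mul_assoc, ← succ_mul_hypergeometric01Coeff_succ, mul_comm (x ^ _)] using hderiv
  rw [div_eq_inv_mul, ((hasSum_hypergeometric01 (add_one_add_natCast_ne_zero ha) x).mul_left
    a⁻¹).unique hshift]
  exact (analyticOnNhd_hypergeometric01 ha x trivial).differentiableAt.hasDerivAt

theorem hypergeometric01_contiguous (ha : ∀ n : ℕ, a + n ≠ 0) (x : 𝕜) :
    hypergeometric01 a x =
      hypergeometric01 (a + 1) x + x / (a * (a + 1)) * hypergeometric01 (a + 1 + 1) x := by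
  have ha₁ := add_one_add_natCast_ne_zero ha
  have hcoeff (n : ℕ) : hypergeometric01Coeff a (n + 1) = hypergeometric01Coeff (a + 1) (n + 1) +
      (a * (a + 1))⁻¹ * hypergeometric01Coeff (a + 1 + 1) n := by
    have hn : (n + 1 : 𝕜) ≠ 0 := n.cast_add_one_ne_zero
    have h₀ : a ≠ 0 := by simpa using ha 0
    have h₁ := ha₁ n
    rw [mul_inv, mul_assoc, ← succ_mul_hypergeometric01Coeff_succ,
      hypergeometric01Coeff_succ (a + 1), ← mul_right_inj' hn, succ_mul_hypergeometric01Coeff_succ]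
    field_simp
    ring
  have hleft := (hasSum_nat_add_iff' 1).2 (hasSum_hypergeometric01 ha x)
  have hright := ((hasSum_nat_add_iff' 1).2 (hasSum_hypergeometric01 ha₁ x)).add
    ((hasSum_hypergeometric01 (add_one_add_natCast_ne_zero ha₁) x).mul_left (x / (a * (a + 1))))
  have heq := hleft.unique (hright.congr_fun fun n => by rw [hcoeff]; ring)
  simp only [Finset.sum_range_one, hypergeometric01Coeff_zero] at heq
  linear_combination heq

end Hypergeometric

section AnalyticZeros

variable {E F : Type*} [NormedAddCommGroup F] [NormedSpace ℝ F]

theorem ae_ne_zero_of_analyticOnNhd_real {f : ℝ → F} (hf : AnalyticOnNhd ℝ f Set.univ) {t₀ : ℝ}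
    (ht₀ : f t₀ ≠ 0) : ∀ᵐ t, f t ≠ 0 := by
  have hcod : f ⁻¹' {0}ᶜ ∈ codiscrete ℝ := hf.preimage_zero_mem_codiscrete ht₀
  have hae := ae_restrict_le_codiscreteWithin (μ := volume) MeasurableSet.univ hcod
  rwa [Measure.restrict_univ] at hae

theorem ae_ne_zero_of_analyticOnNhd [NormedAddCommGroup E] [NormedSpace ℝ E]
    [FiniteDimensional ℝ E] [MeasurableSpace E] [BorelSpace E] (μ : Measure E) [μ.IsAddHaarMeasure]
    {f : E → F} (hf : AnalyticOnNhd ℝ f Set.univ) {x₀ : E} (hx₀ : f x₀ ≠ 0) :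
    ∀ᵐ x ∂μ, f x ≠ 0 := by
  have hfc : Continuous f := continuousOn_univ.1 hf.continuousOn
  have hmeas : MeasurableSet {p : E × ℝ | f (x₀ + p.2 • p.1) ≠ 0} :=
    (isOpen_ne_fun (by fun_prop) continuous_const).measurableSet
  have hline (v : E) : ∀ᵐ t : ℝ, f (x₀ + t • v) ≠ 0 :=
    ae_ne_zero_of_analyticOnNhd_real (f := fun t : ℝ => f (x₀ + t • v)) (t₀ := 0)
      (fun t _ => (hf _ trivial).comp_of_eq (by fun_prop) rfl) (by simpa using hx₀)
  have hdilation : ∀ᵐ t : ℝ, ∀ᵐ v ∂μ, f (x₀ + t • v) ≠ 0 :=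
    (Measure.ae_ae_comm hmeas).1 (.of_forall hline)
  obtain ⟨t, ht, ht₀⟩ := (hdilation.and (Measure.ae_ne volume 0)).exists
  have hpre : {v | ¬f (x₀ + t • v) ≠ 0} = (t • ·) ⁻¹' ((x₀ + ·) ⁻¹' {x | ¬f x ≠ 0}) := rfl
  rw [ae_iff, hpre, Measure.addHaar_preimage_smul μ ht₀, measure_preimage_add] at ht
  simpa [ae_iff, ht₀] using ht

end AnalyticZeros

theorem interior_eq_empty_of_forall_ae_notMem {X Y : Type*} [TopologicalSpace X]
    [TopologicalSpace Y] [MeasurableSpace Y] (ν : Measure Y) [ν.IsOpenPosMeasure] {N : Set (X × Y)}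
    (hN : ∀ x, ∀ᵐ y ∂ν, (x, y) ∉ N) : interior N = ∅ := by
  refine Set.eq_empty_of_forall_notMem fun ⟨x, y⟩ hxy => ?_
  have hslice : Prod.mk x ⁻¹' N ∈ 𝓝 y :=
    (Continuous.prodMk_right x).continuousAt (mem_interior_iff_mem_nhds.1 hxy)
  obtain ⟨y', hy', hy'N⟩ := (Measure.dense_of_ae (hN x)).inter_nhds_nonempty hslice
  exact hy' hy'N

section Asymptotics

theorem eq_exp_smul_of_hasDerivAt {V : Type*} [NormedAddCommGroup V] [NormedSpace ℝ V] {c : ℝ}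
    {x : ℝ → V} (hx : ∀ t, 0 ≤ t → HasDerivAt x (c • x t) t) {t : ℝ} (ht : 0 ≤ t) :
    x t = Real.exp (c * t) • x 0 := by
  have hderiv (s : ℝ) (hs : 0 ≤ s) : HasDerivAt (fun s => Real.exp (-(c * s)) • x s) 0 s := by
    have hexp := ((hasDerivAt_id' s).const_mul c).fun_neg.exp
    simpa [smul_smul, ← add_smul] using hexp.fun_smul (hx s hs)
  have hconst := constant_of_has_deriv_right_zero (a := 0) (b := t)
    (fun s hs => (hderiv s hs.1).continuousAt.continuousWithinAt)
    (fun s hs => (hderiv s hs.1).hasDerivWithinAt) t ⟨ht, le_rfl⟩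
  simp only [mul_zero, neg_zero, Real.exp_zero, one_smul] at hconst
  rw [← hconst, smul_smul, ← Real.exp_add, add_neg_cancel, Real.exp_zero, one_smul]

theorem tendsto_atTop_of_hasDerivAt_ge {w w' : ℝ → ℝ} {κ : ℝ} (hκ : 0 < κ)
    (hw : ∀ᶠ t in atTop, HasDerivAt w (w' t) t ∧ κ ≤ w' t) : Tendsto w atTop atTop := by
  obtain ⟨T, hT⟩ := eventually_atTop.1 hw
  have hlinear : Tendsto (fun t => w T + κ * (t - T)) atTop atTop :=
    tendsto_atTop_add_const_left _ _
      ((tendsto_atTop_add_const_right _ _ tendsto_id).const_mul_atTop hκ)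
  refine tendsto_atTop_mono' _ ?_ hlinear
  filter_upwards [eventually_ge_atTop T] with t ht
  have := (convex_Ici T).mul_sub_le_image_sub_of_le_deriv (f := w) (C := κ)
    (fun s hs => (hT s hs).1.continuousAt.continuousWithinAt)
    (fun s hs => (hT s (interior_subset hs)).1.differentiableAt.differentiableWithinAt)
    (fun s hs => (hT s (interior_subset hs)).1.deriv ▸ (hT s (interior_subset hs)).2)
    T Set.self_mem_Ici t ht ht
  linarith

variable {k : ℝ} {w τ : ℝ → ℝ}

theorem monotoneOn_of_hasDerivAt_logistic (hk : 0 ≤ k)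
    (hw : ∀ t, 0 ≤ t → HasDerivAt w (k * (1 - τ t) * w t) t) (hτ : ∀ t, 0 ≤ t → τ t ≤ 1)
    (hw_nonneg : ∀ t, 0 ≤ t → 0 ≤ w t) : MonotoneOn w (Set.Ici 0) := by
  refine monotoneOn_of_hasDerivWithinAt_nonneg (f' := fun t => k * (1 - τ t) * w t) (convex_Ici 0)
    (fun t ht => (hw t ht).continuousAt.continuousWithinAt)
    (fun t ht => (hw t (interior_subset ht)).hasDerivWithinAt) fun t ht => ?_
  have ht₀ : 0 ≤ t := interior_subset ht
  exact mul_nonneg (mul_nonneg hk (sub_nonneg.2 (hτ t ht₀))) (hw_nonneg t ht₀)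

theorem tendsto_one_of_hasDerivAt_logistic (hk : 0 < k)
    (hw : ∀ t, 0 ≤ t → HasDerivAt w (k * (1 - τ t) * w t) t) (hτ : ∀ t, 0 ≤ t → τ t ≤ 1)
    (hw_nonneg : ∀ t, 0 ≤ t → 0 ≤ w t) (hw₀ : 0 < w 0)
    (hwτ : Tendsto (fun t => w t - τ t) atTop (𝓝 0)) : Tendsto τ atTop (𝓝 1) := by
  have hmono := monotoneOn_of_hasDerivAt_logistic hk.le hw hτ hw_nonneg
  suffices hw₁ : Tendsto w atTop (𝓝 1) by simpa using hw₁.sub hwτ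
  refine tendsto_order.2 ⟨fun a ha => ?_, fun a ha => ?_⟩
  · by_contra hfreq
    have hbdd (t : ℝ) (ht : 0 ≤ t) : w t ≤ a := by
      refine not_lt.1 fun hat => hfreq ?_
      filter_upwards [eventually_ge_atTop t] with s hs
      exact hat.trans_le (hmono ht (ht.trans hs) hs)
    have hgrowth : ∀ᶠ t in atTop, HasDerivAt w (k * (1 - τ t) * w t) t ∧
        k * ((1 - a) / 2) * w 0 ≤ k * (1 - τ t) * w t := by
      have hgap : -((1 - a) / 2) < 0 := by linarith
      filter_upwards [eventually_ge_atTop 0, hwτ.eventually_const_lt hgap] with t ht hclose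
      have hrate : (1 - a) / 2 ≤ 1 - τ t := by linarith [hbdd t ht]
      exact ⟨hw t ht, mul_le_mul (mul_le_mul_of_nonneg_left hrate hk.le)
        (hmono Set.self_mem_Ici ht ht) hw₀.le (mul_nonneg hk.le (sub_nonneg.2 (hτ t ht)))⟩
    have hinfty := tendsto_atTop_of_hasDerivAt_ge (by have := sub_pos.2 ha; positivity) hgrowth
    obtain ⟨t, hat, ht⟩ := ((hinfty.eventually_gt_atTop a).and (eventually_ge_atTop 0)).exists
    exact hat.not_ge (hbdd t ht)
  · filter_upwards [eventually_ge_atTop 0, hwτ.eventually_lt_const (sub_pos.2 ha)] with t ht hclose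
    linarith [hτ t ht]

end Asymptotics

section MatrixCalculus

variable {m n p : Type*} {t : ℝ}

theorem hasDerivAt_matrix [Finite n] {A : ℝ → Matrix m n ℝ} {A' : Matrix m n ℝ} :
    HasDerivAt A A' t ↔ ∀ i j, HasDerivAt (fun s => A s i j) (A' i j) t := by
  cases nonempty_fintype n
  exact hasDerivAt_pi.trans (forall_congr' fun _ => hasDerivAt_pi)

theorem hasDerivAt_transpose [Finite m] [Finite n] {A : ℝ → Matrix m n ℝ} {A' : Matrix m n ℝ}
    (hA : HasDerivAt A A' t) : HasDerivAt (fun s => (A s)ᵀ) A'ᵀ t :=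
  hasDerivAt_matrix.2 fun j i => hasDerivAt_matrix.1 hA i j

variable [Fintype n]

theorem hasDerivAt_dotProduct {x y : ℝ → n → ℝ} {x' y' : n → ℝ} (hx : HasDerivAt x x' t)
    (hy : HasDerivAt y y' t) :
    HasDerivAt (fun s => x s ⬝ᵥ y s) (x' ⬝ᵥ y t + x t ⬝ᵥ y') t := by
  simp only [dotProduct, ← Finset.sum_add_distrib]
  exact .fun_sum fun i _ => (hasDerivAt_pi.1 hx i).mul (hasDerivAt_pi.1 hy i)

theorem hasDerivAt_mulVec {A : ℝ → Matrix m n ℝ} {A' : Matrix m n ℝ} {x : ℝ → n → ℝ} {x' : n → ℝ}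
    (hA : HasDerivAt A A' t) (hx : HasDerivAt x x' t) :
    HasDerivAt (fun s => A s *ᵥ x s) (A' *ᵥ x t + A t *ᵥ x') t :=
  hasDerivAt_pi.2 fun i => hasDerivAt_dotProduct (hasDerivAt_pi.1 hA i) hx

theorem hasDerivAt_matrix_mul [Finite p] {A : ℝ → Matrix m n ℝ} {A' : Matrix m n ℝ}
    {B : ℝ → Matrix n p ℝ} {B' : Matrix n p ℝ} (hA : HasDerivAt A A' t) (hB : HasDerivAt B B' t) :
    HasDerivAt (fun s => A s * B s) (A' * B t + A t * B') t :=
  hasDerivAt_matrix.2 fun i k => hasDerivAt_dotProduct (hasDerivAt_pi.1 hA i)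
    (hasDerivAt_pi.2 fun j => hasDerivAt_matrix.1 hB j k)

theorem hasDerivAt_comp_of_isLinearMap {V W : Type*} [NormedAddCommGroup V] [NormedSpace ℝ V]
    [FiniteDimensional ℝ V] [NormedAddCommGroup W] [NormedSpace ℝ W] {L : V → W}
    (hL : IsLinearMap ℝ L) {x : ℝ → V} {x' : V} (hx : HasDerivAt x x' t) :
    HasDerivAt (fun s => L (x s)) (L x') t :=
  (hL.mk' L).toContinuousLinearMap.hasFDerivAt.comp_hasDerivAt t hx

theorem dotProduct_mulVec_of_transpose_eq_neg {A : Matrix n n ℝ} (hA : Aᵀ = -A) (x y : n → ℝ) :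
    x ⬝ᵥ A *ᵥ y = -(A *ᵥ x ⬝ᵥ y) := by
  rw [dotProduct_mulVec, ← mulVec_transpose, hA, neg_mulVec, neg_dotProduct]

theorem hasDerivAt_quadraticForm_of_commutator {P : ℝ → Matrix n n ℝ} {A : Matrix n n ℝ}
    {x : ℝ → n → ℝ} {x' : n → ℝ} (hP : HasDerivAt P (A * P t - P t * A) t) (hx : HasDerivAt x x' t)
    (hA : Aᵀ = -A) (hsymm : (P t).IsSymm) :
    HasDerivAt (fun s => x s ⬝ᵥ P s *ᵥ x s) (2 * ((x' - A *ᵥ x t) ⬝ᵥ P t *ᵥ x t)) t := by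
  have hP_swap (y z : n → ℝ) : y ⬝ᵥ P t *ᵥ z = z ⬝ᵥ P t *ᵥ y := by
    rw [dotProduct_mulVec, ← mulVec_transpose, hsymm.eq, dotProduct_comm]
  convert hasDerivAt_dotProduct hx (hasDerivAt_mulVec hP hx) using 1
  rw [sub_mulVec, dotProduct_add, dotProduct_sub, ← mulVec_mulVec, ← mulVec_mulVec,
    dotProduct_mulVec_of_transpose_eq_neg hA, hP_swap _ x', hP_swap _ (A *ᵥ x t), sub_dotProduct]
  ring

end MatrixCalculus

section RotationGroup

theorem transpose_mul_S_mul (A : M3) (x : V3) : Aᵀ * S (A *ᵥ x) * A = A.det • S x := by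
  ext i j
  fin_cases i <;> fin_cases j <;>
    simp [S, mul_apply, mulVec, dotProduct, Fin.sum_univ_three, det_fin_three] <;> ring

theorem transpose_S (a : V3) : (S a)ᵀ = -S a := by
  ext i j
  fin_cases i <;> fin_cases j <;> simp [S]

theorem S_mulVec_self (a : V3) : S a *ᵥ a = 0 := by
  ext i
  fin_cases i <;> simp [S, mulVec, dotProduct, Fin.sum_univ_three] <;> ring

theorem mem_SO3_iff {R : M3} : R ∈ SO3 ↔ R ∈ specialOrthogonalGroup (Fin 3) ℝ := by
  rw [mem_specialOrthogonalGroup_iff, mem_orthogonalGroup_iff']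
  rfl

theorem mul_mem_SO3 {Q R : M3} (hQ : Q ∈ SO3) (hR : R ∈ SO3) : Q * R ∈ SO3 :=
  mem_SO3_iff.2 (mul_mem (mem_SO3_iff.1 hQ) (mem_SO3_iff.1 hR))

variable {R : M3}

theorem mul_transpose_of_mem_SO3 (hR : R ∈ SO3) : R * Rᵀ = 1 :=
  mul_eq_one_comm.1 hR.1

theorem transpose_mem_SO3 (hR : R ∈ SO3) : Rᵀ ∈ SO3 :=
  ⟨by rw [transpose_transpose, mul_transpose_of_mem_SO3 hR], by rw [det_transpose, hR.2]⟩

theorem S_mul_of_mem_SO3 (hR : R ∈ SO3) (ω : V3) : S ω * R = R * S (Rᵀ *ᵥ ω) := by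
  have hRR := mul_transpose_of_mem_SO3 hR
  have h := transpose_mul_S_mul R (Rᵀ *ᵥ ω)
  rw [mulVec_mulVec, hRR, one_mulVec, hR.2, one_smul] at h
  rw [← h, ← mul_assoc, ← mul_assoc, hRR, one_mul]

theorem adjugate_of_mem_SO3 (hR : R ∈ SO3) : R.adjugate = Rᵀ := by
  have h := congrArg (Rᵀ * ·) (mul_adjugate R)
  simpa [← mul_assoc, hR.1, hR.2] using h

theorem cofactors_of_mem_SO3 (hR : R ∈ SO3) (i j : Fin 3) :
    R (i + 1) (j + 1) * R (i + 2) (j + 2) - R (i + 1) (j + 2) * R (i + 2) (j + 1) = R i j := by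
  have h := congrFun₂ (adjugate_of_mem_SO3 hR) j i
  rw [adjugate_fin_three, transpose_apply] at h
  rw [← h]
  fin_cases i <;> fin_cases j <;> simp <;> ring

theorem rows_of_mem_SO3 (hR : R ∈ SO3) (i j : Fin 3) :
    R i 0 * R j 0 + R i 1 * R j 1 + R i 2 * R j 2 = if i = j then 1 else 0 := by
  have h := congrFun₂ (mul_transpose_of_mem_SO3 hR) i j
  simpa [mul_apply, Fin.sum_univ_three, one_apply] using h

theorem isClosed_SO3 : IsClosed SO3 :=
  (isClosed_eq (by fun_prop) continuous_const).inter (isClosed_eq (by fun_prop) continuous_const)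

end RotationGroup

section RankOne

variable {n : Type*} [Fintype n]

theorem dotProduct_vecMulVec_mulVec (q x y : n → ℝ) :
    x ⬝ᵥ vecMulVec q q *ᵥ y = (x ⬝ᵥ q) * (y ⬝ᵥ q) := by
  rw [vecMulVec_mulVec, dotProduct_comm q y]
  simp [mul_comm]

theorem exists_eq_vecMulVec_of_minors {K : Matrix n n ℝ}
    (hminors : ∀ i j l, K i j * K i l = K i i * K j l) (htrace : 0 < K.trace) :
    ∃ q : n → ℝ, K = vecMulVec q q := by
  obtain ⟨i, -, hi⟩ := Finset.exists_lt_of_sum_lt (s := Finset.univ) (f := 0) (g := K.diag)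
    (by simpa [trace] using htrace)
  have hi' : 0 < K i i := hi
  refine ⟨fun j => K i j / √(K i i), ?_⟩
  ext j l
  rw [vecMulVec_apply, div_mul_div_comm, Real.mul_self_sqrt hi'.le, hminors,
    mul_div_cancel_left₀ _ hi'.ne']

end RankOne

section Quaternions

/-- The matrix `K(E)` of Davenport's `q`-method, linear in the rotation matrix `E`. -/
def davenport (E : M3) : Matrix (Fin 4) (Fin 4) ℝ :=
  !![E 0 0 + E 1 1 + E 2 2, E 2 1 - E 1 2, E 0 2 - E 2 0, E 1 0 - E 0 1;
     E 2 1 - E 1 2, E 0 0 - E 1 1 - E 2 2, E 0 1 + E 1 0, E 0 2 + E 2 0;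
     E 0 2 - E 2 0, E 0 1 + E 1 0, E 1 1 - E 0 0 - E 2 2, E 1 2 + E 2 1;
     E 1 0 - E 0 1, E 0 2 + E 2 0, E 1 2 + E 2 1, E 2 2 - E 0 0 - E 1 1]

/-- The matrix which for `E ∈ SO3` equals `q qᵀ`, with `± q` the unit quaternions of `E`. It is
polynomial in `E`, so that no sign of `q` has to be chosen. -/
def quatOuter (E : M3) : Matrix (Fin 4) (Fin 4) ℝ := (1 / 4 : ℝ) • (1 + davenport E)

/-- The matrix of `q ↦ ½ q b` on quaternions: the attitude kinematics `Ė = E S(b)` lift to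
`q̇ = ½ q b`. -/
def quatKinematics (b : V3) : Matrix (Fin 4) (Fin 4) ℝ :=
  (1 / 2 : ℝ) • !![0, -b 0, -b 1, -b 2;
                   b 0, 0, b 2, -b 1;
                   b 1, -b 2, 0, b 0;
                   b 2, b 1, -b 0, 0]

/-- The squared scalar part `cos² (θ / 2) = (1 + tr E) / 4` of the unit quaternions of `E`. -/
def alignment (E : M3) : ℝ := quatOuter E 0 0

theorem isLinearMap_davenport : IsLinearMap ℝ davenport where
  map_add E F := by
    ext i j
    fin_cases i <;> fin_cases j <;> simp [davenport] <;> ring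
  map_smul c E := by
    ext i j
    fin_cases i <;> fin_cases j <;> simp [davenport] <;> ring

set_option maxHeartbeats 400000 in
-- Infinitesimally: quaternions of `E * Q` are those of `E` multiplied by those of `Q`.
theorem davenport_mul_S (E : M3) (b : V3) :
    davenport (E * S b) = quatKinematics b * davenport E - davenport E * quatKinematics b := by
  ext i j
  fin_cases i <;> fin_cases j <;>
    simp [davenport, S, quatKinematics, mul_apply, Fin.sum_univ_three] <;> ring

theorem transpose_quatKinematics (b : V3) : (quatKinematics b)ᵀ = -quatKinematics b := by
  ext i j
  fin_cases i <;> fin_cases j <;> simp [quatKinematics]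

theorem isSymm_davenport (E : M3) : (davenport E).IsSymm := by
  ext i j
  fin_cases i <;> fin_cases j <;> rfl

theorem isSymm_quatOuter (E : M3) : (quatOuter E).IsSymm :=
  (isSymm_one.add (isSymm_davenport E)).smul _

theorem trace_quatOuter (E : M3) : (quatOuter E).trace = 1 := by
  simp [quatOuter, davenport, trace, Fin.sum_univ_four]
  ring

theorem continuous_quatOuter : Continuous quatOuter := by
  have h := (isLinearMap_davenport.mk' _).continuous_of_finiteDimensional
  exact (continuous_const.add h).const_smul (1 / 4 : ℝ)

theorem hasDerivAt_quatOuter {E : ℝ → M3} {b : V3} {t : ℝ} (hE : HasDerivAt E (E t * S b) t) :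
    HasDerivAt (fun s => quatOuter (E s))
      (quatKinematics b * quatOuter (E t) - quatOuter (E t) * quatKinematics b) t := by
  have h : HasDerivAt (fun s => quatOuter (E s)) ((1 / 4 : ℝ) • davenport (E t * S b)) t :=
    ((hasDerivAt_comp_of_isLinearMap isLinearMap_davenport hE).const_add 1).const_smul (1 / 4 : ℝ)
  have hcomm : (1 / 4 : ℝ) • davenport (E t * S b) =
      quatKinematics b * quatOuter (E t) - quatOuter (E t) * quatKinematics b := by
    rw [davenport_mul_S, quatOuter, mul_smul_comm, smul_mul_assoc, ← smul_sub, mul_add, add_mul,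
      mul_one, one_mul, add_sub_add_left_eq_sub]
  rwa [hcomm] at h

set_option maxHeartbeats 400000 in
-- Each minor is a linear combination of the cofactor and orthogonality relations.
theorem minors_quatOuter {E : M3} (hE : E ∈ SO3) (i j l : Fin 4) :
    quatOuter E i j * quatOuter E i l = quatOuter E i i * quatOuter E j l := by
  have hc := cofactors_of_mem_SO3 hE
  have hr := rows_of_mem_SO3 hE
  have hs := rows_of_mem_SO3 (transpose_mem_SO3 hE)
  simp [Fin.forall_fin_succ] at hc hr hs
  fin_cases i <;> fin_cases j <;> fin_cases l <;> simp [quatOuter, davenport] <;> linarith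

theorem exists_quatOuter_eq_vecMulVec {E : M3} (hE : E ∈ SO3) :
    ∃ q : Fin 4 → ℝ, quatOuter E = vecMulVec q q ∧ q ⬝ᵥ q = 1 := by
  obtain ⟨q, hq⟩ := exists_eq_vecMulVec_of_minors (minors_quatOuter hE)
    (by rw [trace_quatOuter]; exact one_pos)
  exact ⟨q, hq, by rw [← trace_vecMulVec, ← hq, trace_quatOuter]⟩

end Quaternions

section Overlap

theorem vee_skewPart_apply (E : M3) (i : Fin 3) :
    vee (skewPart E) i = 2 * quatOuter E 0 i.succ := by
  fin_cases i <;> simp [vee, skewPart, quatOuter, davenport] <;> ring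

theorem isLinearMap_vee_skewPart : IsLinearMap ℝ (fun E => vee (skewPart E)) where
  map_add E F := by
    ext i
    fin_cases i <;> simp [vee, skewPart] <;> ring
  map_smul c E := by
    ext i
    fin_cases i <;> simp [vee, skewPart] <;> ring

theorem quatKinematics_vee_skewPart_mulVec {E : M3} {q : Fin 4 → ℝ}
    (hq : quatOuter E = vecMulVec q q) (hq₁ : q ⬝ᵥ q = 1) :
    quatKinematics (vee (skewPart E)) *ᵥ q = q 0 ^ 2 • q - q 0 • Pi.single 0 1 := by
  have hs : vee (skewPart E) = fun i => 2 * (q 0 * q i.succ) := by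
    ext i
    rw [vee_skewPart_apply, hq, vecMulVec_apply]
  rw [hs]
  simp only [dotProduct, Fin.sum_univ_four] at hq₁
  ext i
  fin_cases i <;> simp [quatKinematics, mulVec, dotProduct, Fin.sum_univ_succ]
  · linear_combination -q 0 * hq₁
  all_goals ring

theorem quatKinematics_mulVec_vecCons_smul (z : V3) (a c : ℝ) :
    quatKinematics z *ᵥ vecCons a (c • z) = vecCons (-(c * (z ⬝ᵥ z)) / 2) ((a / 2) • z) := by
  ext i
  fin_cases i <;> simp [quatKinematics, mulVec, dotProduct, Fin.sum_univ_succ] <;> ring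

theorem isLinearMap_quatKinematics : IsLinearMap ℝ quatKinematics where
  map_add x y := by
    ext i j
    fin_cases i <;> fin_cases j <;> simp [quatKinematics] <;> ring
  map_smul c x := by
    ext i j
    fin_cases i <;> fin_cases j <;> simp [quatKinematics] <;> ring

theorem alignment_eq_sq {E : M3} {q : Fin 4 → ℝ} (hq : quatOuter E = vecMulVec q q) :
    alignment E = q 0 ^ 2 := by
  rw [alignment, hq, vecMulVec_apply, sq]

theorem alignment_le_one {E : M3} (hE : E ∈ SO3) : alignment E ≤ 1 := by
  obtain ⟨q, hq, hq₁⟩ := exists_quatOuter_eq_vecMulVec hE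
  rw [alignment_eq_sq hq, ← hq₁, sq]
  exact Finset.single_le_sum (f := fun i => q i * q i) (fun i _ => mul_self_nonneg _)
    (Finset.mem_univ 0)

/-- The vector `p(z)` solving the adjoint `ṗ = A(z) p + kP (p - p₀ e₀)`, `p(0) = e₀`, of the linear
quaternion kinematics along `ż = -kD z`; here `A = quatKinematics`. -/
def quatCovector (kP kD : ℝ) (z : V3) : Fin 4 → ℝ :=
  vecCons (hypergeometric01 ((kD + kP) / (2 * kD)) (-(z ⬝ᵥ z) / (16 * kD ^ 2)))
    ((-hypergeometric01 ((kD + kP) / (2 * kD) + 1) (-(z ⬝ᵥ z) / (16 * kD ^ 2)) /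
      (2 * (kD + kP))) • z)

/-- The squared inner product `⟨q, p(z)⟩²` of the unit quaternions `± q` of `E` with
`quatCovector`. -/
def overlap (kP kD : ℝ) (E : M3) (z : V3) : ℝ :=
  quatCovector kP kD z ⬝ᵥ quatOuter E *ᵥ quatCovector kP kD z

variable {kP kD : ℝ}

theorem quatCovector_zero : quatCovector kP kD 0 = Pi.single 0 1 := by
  ext i
  cases i using Fin.cases <;> simp [quatCovector, hypergeometric01_zero]

theorem overlap_eq_sq {E : M3} {q : Fin 4 → ℝ} (hq : quatOuter E = vecMulVec q q) (z : V3) :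
    overlap kP kD E z = (quatCovector kP kD z ⬝ᵥ q) ^ 2 := by
  rw [overlap, hq, dotProduct_vecMulVec_mulVec, sq]

theorem overlap_nonneg {E : M3} (hE : E ∈ SO3) (z : V3) : 0 ≤ overlap kP kD E z := by
  obtain ⟨q, hq, -⟩ := exists_quatOuter_eq_vecMulVec hE
  rw [overlap_eq_sq hq]
  exact sq_nonneg _

variable (hkP : 0 < kP) (hkD : 0 < kD)

include hkP hkD

theorem hypergeometric01_param_add_natCast_ne_zero (n : ℕ) : (kD + kP) / (2 * kD) + n ≠ 0 := by
  positivity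

theorem analyticOnNhd_quatCovector (i : Fin 4) :
    AnalyticOnNhd ℝ (fun z => quatCovector kP kD z i) Set.univ := by
  have hα := hypergeometric01_param_add_natCast_ne_zero hkP hkD
  have hproj (j : Fin 3) : AnalyticOnNhd ℝ (fun z : V3 => z j) Set.univ :=
    (ContinuousLinearMap.proj (R := ℝ) (φ := fun _ : Fin 3 => ℝ) j).analyticOnNhd _
  have harg : AnalyticOnNhd ℝ (fun z : V3 => -(z ⬝ᵥ z) / (16 * kD ^ 2)) Set.univ := by
    simp only [dotProduct, div_eq_mul_inv]
    exact (Finset.analyticOnNhd_fun_sum _ fun j _ => (hproj j).mul (hproj j)).neg.mul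
      analyticOnNhd_const
  cases i using Fin.cases with
  | zero => exact (analyticOnNhd_hypergeometric01 hα).comp harg (Set.mapsTo_univ _ _)
  | succ j =>
    have hF := (analyticOnNhd_hypergeometric01 (add_one_add_natCast_ne_zero hα)).comp harg
      (Set.mapsTo_univ _ _)
    exact (hF.neg.div_const).mul (hproj j)

theorem continuous_quatCovector : Continuous (quatCovector kP kD) :=
  continuous_pi fun i => continuousOn_univ.1 (analyticOnNhd_quatCovector hkP hkD i).continuousOn

theorem hasDerivAt_quatCovector {z : ℝ → V3} {t : ℝ} (hz : HasDerivAt z (-kD • z t) t) :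
    HasDerivAt (fun s => quatCovector kP kD (z s))
      (quatKinematics (z t) *ᵥ quatCovector kP kD (z t) +
        kP • (quatCovector kP kD (z t) - quatCovector kP kD (z t) 0 • Pi.single 0 1)) t := by
  have hα := hypergeometric01_param_add_natCast_ne_zero hkP hkD
  have hα' := add_one_add_natCast_ne_zero hα
  have harg : HasDerivAt (fun s => -(z s ⬝ᵥ z s) / (16 * kD ^ 2)) (z t ⬝ᵥ z t / (8 * kD)) t := by
    refine ((hasDerivAt_dotProduct hz hz).neg.div_const (16 * kD ^ 2)).congr_deriv ?_
    rw [dotProduct_smul, smul_dotProduct, smul_eq_mul]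
    field_simp
    ring
  have hscalar := (hasDerivAt_hypergeometric01 hα _).comp t harg
  have hvector := (((hasDerivAt_hypergeometric01 hα' _).comp t harg).neg.div_const
    (2 * (kD + kP))).smul hz
  have hkDP : kD + kP ≠ 0 := by positivity
  rw [quatCovector, quatKinematics_mulVec_vecCons_smul, hypergeometric01_contiguous hα]
  refine hasDerivAt_pi.2 (Fin.cases (hscalar.congr_deriv ?_) fun j =>
    (hasDerivAt_pi.1 hvector j).congr_deriv ?_)
  · simp only [Pi.add_apply, Pi.smul_apply, Pi.sub_apply, cons_val_zero,
      Pi.single_eq_same, smul_eq_mul, mul_one, sub_self, mul_zero, add_zero]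
    field_simp
    ring
  · simp only [Function.comp_apply, Pi.add_apply, Pi.neg_apply, Pi.smul_apply, Pi.sub_apply,
      cons_val_succ, Pi.single_eq_of_ne (Fin.succ_ne_zero j), smul_eq_mul, mul_zero, sub_zero]
    field_simp
    ring

theorem continuous_overlap : Continuous fun x : M3 × V3 => overlap kP kD x.1 x.2 := by
  have hp := (continuous_quatCovector hkP hkD).comp (continuous_snd (X := M3))
  exact hp.dotProduct ((continuous_quatOuter.comp continuous_fst).matrix_mulVec hp)

theorem hasDerivAt_overlap {E : ℝ → M3} {z : ℝ → V3} {t : ℝ} (hE : E t ∈ SO3)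
    (hE' : HasDerivAt E (E t * S (z t - kP • vee (skewPart (E t)))) t)
    (hz' : HasDerivAt z (-kD • z t) t) :
    HasDerivAt (fun s => overlap kP kD (E s) (z s))
      (2 * kP * (1 - alignment (E t)) * overlap kP kD (E t) (z t)) t := by
  refine (hasDerivAt_quadraticForm_of_commutator (hasDerivAt_quatOuter hE')
    (hasDerivAt_quatCovector hkP hkD hz') (transpose_quatKinematics _)
    (isSymm_quatOuter _)).congr_deriv ?_
  obtain ⟨q, hq, hq₁⟩ := exists_quatOuter_eq_vecMulVec hE
  rw [isLinearMap_quatKinematics.map_sub, isLinearMap_quatKinematics.map_smul,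
    overlap_eq_sq hq, alignment_eq_sq hq, hq, dotProduct_vecMulVec_mulVec]
  set p := quatCovector kP kD (z t)
  have hAp : quatKinematics (vee (skewPart (E t))) *ᵥ p ⬝ᵥ q = p 0 * q 0 - q 0 ^ 2 * (p ⬝ᵥ q) := by
    rw [← neg_eq_iff_eq_neg.2 (dotProduct_mulVec_of_transpose_eq_neg
      (transpose_quatKinematics _) _ _), quatKinematics_vee_skewPart_mulVec hq hq₁]
    simp [dotProduct_sub]
    ring
  simp only [sub_mulVec, smul_mulVec, sub_dotProduct, add_dotProduct, smul_dotProduct, hAp,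
    smul_eq_mul, single_dotProduct]
  ring

theorem eventually_abs_overlap_sub_alignment_lt {ε : ℝ} (hε : 0 < ε) :
    ∀ᶠ z in 𝓝 (0 : V3), ∀ E ∈ SO3, |overlap kP kD E z - alignment E| < ε := by
  set p := quatCovector kP kD
  set e : Fin 4 → ℝ := Pi.single 0 1
  have hlim : Tendsto (fun z => ((p z - e) ⬝ᵥ (p z - e)) * ((p z + e) ⬝ᵥ (p z + e)))
      (𝓝 0) (𝓝 0) := by
    have hp := continuous_quatCovector hkP hkD
    have hcont : Continuous fun z => ((p z - e) ⬝ᵥ (p z - e)) * ((p z + e) ⬝ᵥ (p z + e)) := by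
      fun_prop
    simpa [p, e, quatCovector_zero] using hcont.tendsto 0
  filter_upwards [hlim.eventually_lt_const (sq_pos_of_pos hε)] with z hz E hE
  obtain ⟨q, hq, hq₁⟩ := exists_quatOuter_eq_vecMulVec hE
  have hfactor : overlap kP kD E z - alignment E = ((p z - e) ⬝ᵥ q) * ((p z + e) ⬝ᵥ q) := by
    rw [overlap_eq_sq hq, alignment_eq_sq hq, sub_dotProduct, add_dotProduct, single_one_dotProduct]
    ring
  have hCS (x : Fin 4 → ℝ) : (x ⬝ᵥ q) ^ 2 ≤ x ⬝ᵥ x := by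
    have h := Finset.sum_mul_sq_le_sq_mul_sq Finset.univ x q
    simp only [sq (x _), sq (q _)] at h
    exact h.trans_eq (by rw [← dotProduct, ← dotProduct, hq₁, mul_one])
  refine abs_lt_of_sq_lt_sq (lt_of_le_of_lt ?_ hz) hε.le
  rw [hfactor, mul_pow]
  exact mul_le_mul (hCS _) (hCS _) (sq_nonneg _) ((sq_nonneg _).trans (hCS _))

theorem analyticOnNhd_overlap (E : M3) : AnalyticOnNhd ℝ (overlap kP kD E) Set.univ := by
  have hp := analyticOnNhd_quatCovector hkP hkD
  change AnalyticOnNhd ℝ (fun z => ∑ i, quatCovector kP kD z i *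
    ∑ j, quatOuter E i j * quatCovector kP kD z j) Set.univ
  exact Finset.analyticOnNhd_fun_sum _ fun i _ => (hp i).mul
    (Finset.analyticOnNhd_fun_sum _ fun j _ => analyticOnNhd_const.mul (hp j))

theorem exists_overlap_ne_zero {E : M3} (hE : E ∈ SO3) : ∃ z, overlap kP kD E z ≠ 0 := by
  obtain ⟨q, hq, hq₁⟩ := exists_quatOuter_eq_vecMulVec hE
  by_contra! hzero
  have horth (z : V3) : quatCovector kP kD z ⬝ᵥ q = 0 := by
    rw [← sq_eq_zero_iff, ← overlap_eq_sq hq, hzero]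
  have hq₀ : q 0 = 0 := by simpa [quatCovector_zero] using horth 0
  have htail : vecTail q ⬝ᵥ vecTail q = 1 := by
    rw [← hq₁, ← cons_head_tail q, cons_dotProduct_cons, tail_cons, vecHead, hq₀, mul_zero,
      zero_add]
  have hcont : Continuous fun c : ℝ =>
      hypergeometric01 ((kD + kP) / (2 * kD) + 1) (-(c * c) / (16 * kD ^ 2)) :=
    (continuousOn_univ.1 (analyticOnNhd_hypergeometric01 (add_one_add_natCast_ne_zero
      (hypergeometric01_param_add_natCast_ne_zero hkP hkD))).continuousOn).comp (by fun_prop)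
  have hne := hcont.continuousAt.eventually_ne (x := 0) (y := 0)
    (by simp [hypergeometric01_zero])
  obtain ⟨c, hc, hc₀⟩ := ((hne.filter_mono nhdsWithin_le_nhds).and
    (self_mem_nhdsWithin (s := {0}ᶜ))).exists
  have h := horth (c • vecTail q)
  rw [quatCovector, cons_dotProduct, vecHead, hq₀, mul_zero, zero_add] at h
  simp only [smul_dotProduct, dotProduct_smul, htail, smul_eq_mul, mul_one] at h
  exact mul_ne_zero (div_ne_zero (neg_ne_zero.2 hc) (by positivity)) hc₀ h

end Overlap

section AttitudeCoordinates

/-- The sliding variable `z`: body angular velocity plus `kP` times the attitude error vector.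
Along closed-loop solutions `ż = -kD z`. -/
def slidingVar (kP : ℝ) (Rd R : M3) (ω : V3) : V3 :=
  Rᵀ *ᵥ ω + kP • vee (skewPart (Rdᵀ * R))

variable {kP : ℝ} {Rd : M3}

theorem continuous_vee_skewPart : Continuous fun E => vee (skewPart E) :=
  (isLinearMap_vee_skewPart.mk' _).continuous_of_finiteDimensional

theorem continuous_slidingVar : Continuous fun x : M3 × V3 => slidingVar kP Rd x.1 x.2 := by
  have h := continuous_vee_skewPart.comp
    (continuous_const.matrix_mul continuous_fst : Continuous fun x : M3 × V3 => Rdᵀ * x.1)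
  exact (continuous_fst.matrix_transpose.matrix_mulVec continuous_snd).add (h.const_smul kP)

theorem alignment_eq (E : M3) : alignment E = (1 + E.trace) / 4 := by
  simp [alignment, quatOuter, davenport, trace_fin_three]
  ring

theorem alignment_self_error (hRd : Rd ∈ SO3) : alignment (Rdᵀ * Rd) = 1 := by
  rw [hRd.1, alignment_eq, trace_one, Fintype.card_fin]
  norm_num

theorem slidingVar_self_zero (hRd : Rd ∈ SO3) : slidingVar kP Rd Rd 0 = 0 := by
  rw [slidingVar, hRd.1]
  ext i
  fin_cases i <;> simp [vee, skewPart]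

theorem sub_sq_le_alignment (hRd : Rd ∈ SO3) {R : M3} (hR : R ∈ SO3) (i j : Fin 3) :
    (R i j - Rd i j) ^ 2 ≤ 8 * (1 - alignment (Rdᵀ * R)) := by
  have htrace : ((R - Rd)ᵀ * (R - Rd)).trace = 8 * (1 - alignment (Rdᵀ * R)) := by
    have hcross : (Rᵀ * Rd).trace = (Rdᵀ * R).trace := by
      rw [← trace_transpose, transpose_mul, transpose_transpose]
    rw [transpose_sub, sub_mul, mul_sub, mul_sub, hR.1, hRd.1, trace_sub, trace_sub, trace_sub,
      hcross, alignment_eq, trace_one, Fintype.card_fin]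
    push_cast
    ring
  have hdiag (k : Fin 3) : ((R - Rd)ᵀ * (R - Rd)) k k = ∑ l, (R l k - Rd l k) ^ 2 := by
    simp [mul_apply, sq]
  simp only [← htrace, trace, diag_apply, hdiag]
  exact (Finset.single_le_sum (f := fun l => (R l j - Rd l j) ^ 2) (fun l _ => sq_nonneg _)
    (Finset.mem_univ i)).trans (Finset.single_le_sum (f := fun k => ∑ l, (R l k - Rd l k) ^ 2)
    (fun k _ => Finset.sum_nonneg fun l _ => sq_nonneg _) (Finset.mem_univ j))

theorem comap_alignment_slidingVar_le_nhds (hRd : Rd ∈ SO3) :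
    comap (fun x : M3 × V3 => (alignment (Rdᵀ * x.1), slidingVar kP Rd x.1 x.2)) (𝓝 (1, 0)) ⊓
      𝓟 (SO3 ×ˢ Set.univ) ≤ 𝓝 (Rd, 0) := by
  set l := comap (fun x : M3 × V3 => (alignment (Rdᵀ * x.1), slidingVar kP Rd x.1 x.2))
    (𝓝 (1, 0)) ⊓ 𝓟 (SO3 ×ˢ Set.univ)
  have hcoord : Tendsto (fun x : M3 × V3 => (alignment (Rdᵀ * x.1), slidingVar kP Rd x.1 x.2)) l
      (𝓝 (1, 0)) := tendsto_comap.mono_left inf_le_left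
  have hSO3 : ∀ᶠ x in l, x.1 ∈ SO3 := by
    filter_upwards [mem_inf_of_right (mem_principal_self _)] with x hx using hx.1
  have hR : Tendsto Prod.fst l (𝓝 Rd) := by
    refine tendsto_pi_nhds.2 fun i => tendsto_pi_nhds.2 fun j => ?_
    have hbound : Tendsto (fun x : M3 × V3 => 8 * (1 - alignment (Rdᵀ * x.1))) l (𝓝 0) := by
      simpa using (hcoord.fst_nhds.const_sub 1).const_mul 8
    have hsq := squeeze_zero' (.of_forall fun x => sq_nonneg (x.1 i j - Rd i j))
      (hSO3.mono fun x hx => sub_sq_le_alignment hRd hx i j) hbound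
    have habs := hsq.sqrt
    simp only [Real.sqrt_sq_eq_abs, Real.sqrt_zero] at habs
    exact tendsto_sub_nhds_zero_iff.1 ((tendsto_zero_iff_abs_tendsto_zero _).2 habs)
  have hω : Tendsto Prod.snd l (𝓝 0) := by
    have hcont : Continuous fun y : M3 × V3 => y.1 *ᵥ (y.2 - kP • vee (skewPart (Rdᵀ * y.1))) := by
      have h := continuous_vee_skewPart.comp
        (continuous_const.matrix_mul continuous_fst : Continuous fun y : M3 × V3 => Rdᵀ * y.1)
      exact continuous_fst.matrix_mulVec (continuous_snd.sub (h.const_smul kP))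
    have hlim := (hcont.tendsto (Rd, 0)).comp (hR.prodMk_nhds hcoord.snd_nhds)
    have hzero : Rd *ᵥ (0 - kP • vee (skewPart (Rdᵀ * Rd))) = 0 := by
      have h := slidingVar_self_zero (kP := kP) hRd
      rw [slidingVar, mulVec_zero, zero_add] at h
      rw [h, sub_zero, mulVec_zero]
    rw [hzero] at hlim
    refine hlim.congr' (hSO3.mono fun x hx => ?_)
    simp [slidingVar, mul_transpose_of_mem_SO3 hx]
  exact hR.prodMk_nhds hω

theorem exists_pos_forall_mem_of_mem_nhds (hRd : Rd ∈ SO3) {U : Set (M3 × V3)}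
    (hU : U ∈ 𝓝 (Rd, 0)) :
    ∃ ε > 0, ∀ R ∈ SO3, ∀ ω : V3, 1 - ε < alignment (Rdᵀ * R) → ‖slidingVar kP Rd R ω‖ < ε →
      (R, ω) ∈ U := by
  obtain ⟨ε, hε, hsub⟩ := ((Metric.nhds_basis_ball.comap _).inf_principal _).mem_iff.1
    (comap_alignment_slidingVar_le_nhds (kP := kP) hRd hU)
  refine ⟨ε, hε, fun R hR ω hτ hz => hsub ⟨?_, hR, Set.mem_univ _⟩⟩
  have hτ₁ := alignment_le_one (mul_mem_SO3 (transpose_mem_SO3 hRd) hR)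
  have hdist : dist (alignment (Rdᵀ * R)) 1 < ε := by
    rw [Real.dist_eq, abs_sub_lt_iff]
    constructor <;> linarith
  exact Metric.mem_ball.2 (max_lt hdist (by simpa using hz))

/-- `overlap` of the attitude error `Rdᵀ R` and the sliding variable, as a function `w` of the
state. It obeys `ẇ = 2 kP (1 - τ) w` with `τ = alignment (Rdᵀ R)`, hence its zero set is
invariant. -/
def errorOverlap (kP kD : ℝ) (Rd R : M3) (ω : V3) : ℝ :=
  overlap kP kD (Rdᵀ * R) (slidingVar kP Rd R ω)

variable {kD : ℝ}

theorem errorOverlap_self_zero (hRd : Rd ∈ SO3) : errorOverlap kP kD Rd Rd 0 = 1 := by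
  rw [errorOverlap, slidingVar_self_zero hRd, ← alignment_self_error hRd]
  simp [overlap, quatCovector_zero, alignment]

variable (hkP : 0 < kP) (hkD : 0 < kD)

include hkP hkD

theorem continuous_errorOverlap : Continuous fun x : M3 × V3 => errorOverlap kP kD Rd x.1 x.2 := by
  have herror : Continuous fun x : M3 × V3 => Rdᵀ * x.1 :=
    continuous_const.matrix_mul continuous_fst
  have h := (continuous_overlap hkP hkD).comp
    (herror.prodMk (continuous_slidingVar (kP := kP) (Rd := Rd)))
  exact h

theorem analyticOnNhd_errorOverlap (R : M3) :
    AnalyticOnNhd ℝ (errorOverlap kP kD Rd R) Set.univ :=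
  (analyticOnNhd_overlap hkP hkD _).comp
    (((mulVecLin Rᵀ).toContinuousLinearMap.analyticOnNhd _).add analyticOnNhd_const)
    (Set.mapsTo_univ _ _)

theorem ae_errorOverlap_ne_zero (hRd : Rd ∈ SO3) {R : M3} (hR : R ∈ SO3) :
    ∀ᵐ ω, errorOverlap kP kD Rd R ω ≠ 0 := by
  obtain ⟨z, hz⟩ := exists_overlap_ne_zero hkP hkD (mul_mem_SO3 (transpose_mem_SO3 hRd) hR)
  refine ae_ne_zero_of_analyticOnNhd volume (analyticOnNhd_errorOverlap hkP hkD R)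
    (x₀ := R *ᵥ (z - kP • vee (skewPart (Rdᵀ * R)))) ?_
  rwa [errorOverlap, slidingVar, mulVec_mulVec, hR.1, one_mulVec, sub_add_cancel]

end AttitudeCoordinates

namespace IsClosedLoopSolution

variable {kP kD : ℝ} {Rd : M3} {R : ℝ → M3} {ω : ℝ → V3} {t : ℝ}
  (h : IsClosedLoopSolution kP kD Rd R ω)

include h

theorem transpose_mul_self_eq (ht : 0 ≤ t) : (R t)ᵀ * R t = (R 0)ᵀ * R 0 := by
  have hderiv (s : ℝ) (hs : 0 ≤ s) : HasDerivAt (fun s => (R s)ᵀ * R s) 0 s := by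
    refine (hasDerivAt_matrix_mul (hasDerivAt_transpose (h.1 s hs)) (h.1 s hs)).congr_deriv ?_
    rw [transpose_mul, transpose_S, mul_neg, neg_mul, mul_assoc, neg_add_cancel]
  exact constant_of_has_deriv_right_zero
    (fun s hs => (hderiv s hs.1).continuousAt.continuousWithinAt)
    (fun s hs => (hderiv s hs.1).hasDerivWithinAt) t ⟨ht, le_rfl⟩

theorem mem_SO3 (h₀ : R 0 ∈ SO3) (ht : 0 ≤ t) : R t ∈ SO3 := by
  have horth (s : ℝ) (hs : 0 ≤ s) : (R s)ᵀ * R s = 1 := (h.transpose_mul_self_eq hs).trans h₀.1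
  refine ⟨horth t ht, ?_⟩
  have hcont : ContinuousOn (fun s => (R s).det) (Set.Ici 0) := fun s hs =>
    (continuous_id.matrix_det.continuousAt.comp (h.1 s hs).continuousAt).continuousWithinAt
  have hsq : Set.EqOn ((fun s => (R s).det) ^ 2) 1 (Set.Ici 0) := fun s hs => by
    simpa [sq] using congrArg det (horth s hs)
  rcases isPreconnected_Ici.eq_one_or_eq_neg_one_of_sq_eq hcont hsq with hdet | hdet
  · exact hdet ht
  · have hdet₀ := hdet (Set.self_mem_Ici (a := (0 : ℝ)))
    norm_num [h₀.2] at hdet₀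

theorem hasDerivAt_error (h₀ : R 0 ∈ SO3) (ht : 0 ≤ t) :
    HasDerivAt (fun s => Rdᵀ * R s) (Rdᵀ * R t * S ((R t)ᵀ *ᵥ ω t)) t := by
  refine (hasDerivAt_matrix_mul (hasDerivAt_const t Rdᵀ) (h.1 t ht)).congr_deriv ?_
  rw [S_mul_of_mem_SO3 (h.mem_SO3 h₀ ht), zero_mul, zero_add, mul_assoc]

theorem hasDerivAt_bodyVelocity (h₀ : R 0 ∈ SO3) (ht : 0 ≤ t) :
    HasDerivAt (fun s => (R s)ᵀ *ᵥ ω s) (bodyCmd kP kD Rd (R t) (ω t)) t := by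
  refine (hasDerivAt_mulVec (hasDerivAt_transpose (h.1 t ht)) (h.2 t ht)).congr_deriv ?_
  rw [transpose_mul, transpose_S, mul_neg, neg_mulVec, ← mulVec_mulVec, S_mulVec_self,
    mulVec_zero, neg_zero, zero_add, mulVec_mulVec, (h.mem_SO3 h₀ ht).1, one_mulVec]

theorem hasDerivAt_slidingVar (h₀ : R 0 ∈ SO3) (ht : 0 ≤ t) :
    HasDerivAt (fun s => slidingVar kP Rd (R s) (ω s)) (-kD • slidingVar kP Rd (R t) (ω t)) t := by
  refine ((h.hasDerivAt_bodyVelocity h₀ ht).add ((hasDerivAt_comp_of_isLinearMap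
    isLinearMap_vee_skewPart (h.hasDerivAt_error h₀ ht)).const_smul kP)).congr_deriv ?_
  rw [bodyCmd, slidingVar]
  module

theorem slidingVar_eq (h₀ : R 0 ∈ SO3) (ht : 0 ≤ t) :
    slidingVar kP Rd (R t) (ω t) = Real.exp (-kD * t) • slidingVar kP Rd (R 0) (ω 0) :=
  eq_exp_smul_of_hasDerivAt (fun _ hs => h.hasDerivAt_slidingVar h₀ hs) ht

theorem tendsto_slidingVar (hkD : 0 < kD) (h₀ : R 0 ∈ SO3) :
    Tendsto (fun t => slidingVar kP Rd (R t) (ω t)) atTop (𝓝 0) := by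
  have hexp : Tendsto (fun t => Real.exp (-kD * t)) atTop (𝓝 0) :=
    Real.tendsto_exp_atBot.comp (tendsto_id.const_mul_atTop_of_neg (neg_neg_of_pos hkD))
  rw [← zero_smul ℝ (slidingVar kP Rd (R 0) (ω 0))]
  refine (hexp.smul_const _).congr' ?_
  filter_upwards [eventually_ge_atTop 0] with t ht
  rw [h.slidingVar_eq h₀ ht]

theorem norm_slidingVar_le (hkD : 0 < kD) (h₀ : R 0 ∈ SO3) (ht : 0 ≤ t) :
    ‖slidingVar kP Rd (R t) (ω t)‖ ≤ ‖slidingVar kP Rd (R 0) (ω 0)‖ := by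
  rw [h.slidingVar_eq h₀ ht, norm_smul, Real.norm_eq_abs, Real.abs_exp]
  refine mul_le_of_le_one_left (norm_nonneg _) (Real.exp_le_one_iff.2 ?_)
  exact mul_nonpos_of_nonpos_of_nonneg (neg_nonpos.2 hkD.le) ht

variable (hRd : Rd ∈ SO3)

include hRd

theorem error_mem_SO3 (h₀ : R 0 ∈ SO3) (ht : 0 ≤ t) : Rdᵀ * R t ∈ SO3 :=
  mul_mem_SO3 (transpose_mem_SO3 hRd) (h.mem_SO3 h₀ ht)

variable (hkP : 0 < kP) (hkD : 0 < kD)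

include hkP hkD

theorem hasDerivAt_errorOverlap (h₀ : R 0 ∈ SO3) (ht : 0 ≤ t) :
    HasDerivAt (fun s => errorOverlap kP kD Rd (R s) (ω s))
      (2 * kP * (1 - alignment (Rdᵀ * R t)) * errorOverlap kP kD Rd (R t) (ω t)) t := by
  refine hasDerivAt_overlap hkP hkD (h.error_mem_SO3 hRd h₀ ht) ?_ (h.hasDerivAt_slidingVar h₀ ht)
  rw [slidingVar, add_sub_cancel_right]
  exact h.hasDerivAt_error h₀ ht

theorem errorOverlap_zero_le (h₀ : R 0 ∈ SO3) (ht : 0 ≤ t) :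
    errorOverlap kP kD Rd (R 0) (ω 0) ≤ errorOverlap kP kD Rd (R t) (ω t) :=
  monotoneOn_of_hasDerivAt_logistic (by positivity)
    (fun _ hs => h.hasDerivAt_errorOverlap hRd hkP hkD h₀ hs)
    (fun _ hs => alignment_le_one (h.error_mem_SO3 hRd h₀ hs))
    (fun _ hs => overlap_nonneg (h.error_mem_SO3 hRd h₀ hs) _) Set.self_mem_Ici ht ht

theorem tendsto_alignment (h₀ : R 0 ∈ SO3) (hw₀ : errorOverlap kP kD Rd (R 0) (ω 0) ≠ 0) :
    Tendsto (fun t => alignment (Rdᵀ * R t)) atTop (𝓝 1) := by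
  refine tendsto_one_of_hasDerivAt_logistic (k := 2 * kP) (by positivity)
    (fun _ hs => h.hasDerivAt_errorOverlap hRd hkP hkD h₀ hs)
    (fun _ hs => alignment_le_one (h.error_mem_SO3 hRd h₀ hs))
    (fun _ hs => overlap_nonneg (h.error_mem_SO3 hRd h₀ hs) _)
    (lt_of_le_of_ne (overlap_nonneg (h.error_mem_SO3 hRd h₀ le_rfl) _) hw₀.symm) ?_
  refine Metric.tendsto_nhds.2 fun ε hε => ?_
  filter_upwards [eventually_ge_atTop 0, (h.tendsto_slidingVar hkD h₀).eventually
    (eventually_abs_overlap_sub_alignment_lt hkP hkD hε)] with t ht hclose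
  rw [Real.dist_0_eq_abs]
  exact hclose _ (h.error_mem_SO3 hRd h₀ ht)

theorem tendsto_nhds (h₀ : R 0 ∈ SO3) (hw₀ : errorOverlap kP kD Rd (R 0) (ω 0) ≠ 0) :
    Tendsto (fun t => (R t, ω t)) atTop (𝓝 (Rd, 0)) := by
  refine Tendsto.mono_right (tendsto_inf.2 ⟨tendsto_comap_iff.2 ?_, tendsto_principal.2 ?_⟩)
    (comap_alignment_slidingVar_le_nhds (kP := kP) hRd)
  · exact (h.tendsto_alignment hRd hkP hkD h₀ hw₀).prodMk_nhds (h.tendsto_slidingVar hkD h₀)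
  · filter_upwards [eventually_ge_atTop 0] with t ht
    exact ⟨h.mem_SO3 h₀ ht, Set.mem_univ _⟩

end IsClosedLoopSolution

section Stability

variable {kP kD : ℝ} (hkP : 0 < kP) (hkD : 0 < kD) {Rd : M3} (hRd : Rd ∈ SO3)

include hkP hkD hRd

theorem closedLoop_lyapunov_stable {U : Set (M3 × V3)} (hU : U ∈ 𝓝 (Rd, 0)) :
    ∃ V ∈ 𝓝 ((Rd, 0) : M3 × V3), ∀ (R : ℝ → M3) (ω : ℝ → V3),
      IsClosedLoopSolution kP kD Rd R ω → R 0 ∈ SO3 → (R 0, ω 0) ∈ V →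
        ∀ t : ℝ, 0 ≤ t → (R t, ω t) ∈ U := by
  obtain ⟨ε, hε, hεU⟩ := exists_pos_forall_mem_of_mem_nhds (kP := kP) hRd hU
  obtain ⟨δ, hδ, hclose⟩ := Metric.eventually_nhds_iff.1
    (eventually_abs_overlap_sub_alignment_lt hkP hkD (half_pos hε))
  have hoverlap : ∀ᶠ x : M3 × V3 in 𝓝 (Rd, 0), 1 - ε / 2 < errorOverlap kP kD Rd x.1 x.2 :=
    (continuous_errorOverlap hkP hkD).continuousAt.eventually_const_lt
      (by dsimp only; rw [errorOverlap_self_zero hRd]; linarith)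
  have hsliding : ∀ᶠ x : M3 × V3 in 𝓝 (Rd, 0), ‖slidingVar kP Rd x.1 x.2‖ < min ε δ :=
    continuous_slidingVar.norm.continuousAt.eventually_lt_const
      (by dsimp only; rw [slidingVar_self_zero hRd, norm_zero]; exact lt_min hε hδ)
  refine ⟨_, hoverlap.and hsliding, fun R ω h h₀ ⟨hw₀, hz₀⟩ t ht => ?_⟩
  have hz := (h.norm_slidingVar_le hkD h₀ ht).trans_lt hz₀
  have hw := hw₀.trans_le (h.errorOverlap_zero_le hRd hkP hkD h₀ ht)
  have hwτ := hclose (by simpa using hz.trans_le (min_le_right _ _)) _ (h.error_mem_SO3 hRd h₀ ht)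
  refine hεU _ (h.mem_SO3 h₀ ht) _ ?_ (hz.trans_le (min_le_left _ _))
  rw [errorOverlap] at hw
  linarith [(abs_lt.1 hwτ).2]

end Stability

section ExceptionalSet

/-- The set of initial states excluded from convergence. -/
def exceptionalSet (kP kD : ℝ) (Rd : M3) : Set (M3 × V3) :=
  {x | x.1 ∈ SO3 ∧ errorOverlap kP kD Rd x.1 x.2 = 0}

local instance : BorelSpace M3 := inferInstanceAs (BorelSpace (Fin 3 → Fin 3 → ℝ))

local instance : SecondCountableTopology M3 :=
  inferInstanceAs (SecondCountableTopology (Fin 3 → Fin 3 → ℝ))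

variable {kP kD : ℝ} (hkP : 0 < kP) (hkD : 0 < kD) {Rd : M3}

include hkP hkD

theorem isClosed_exceptionalSet : IsClosed (exceptionalSet kP kD Rd) :=
  (isClosed_SO3.preimage continuous_fst).inter
    (isClosed_eq (continuous_errorOverlap hkP hkD) continuous_const)

theorem ae_notMem_exceptionalSet (hRd : Rd ∈ SO3) (R : M3) :
    ∀ᵐ ω, (R, ω) ∉ exceptionalSet kP kD Rd := by
  by_cases hR : R ∈ SO3
  · filter_upwards [ae_errorOverlap_ne_zero hkP hkD hRd hR] with ω hω hmem using hω hmem.2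
  · exact .of_forall fun ω hmem => hR hmem.1

theorem prod_exceptionalSet (hRd : Rd ∈ SO3) (μ : Measure M3) :
    μ.prod volume (exceptionalSet kP kD Rd) = 0 := by
  rw [Measure.measure_prod_null (isClosed_exceptionalSet hkP hkD).measurableSet]
  exact .of_forall fun R => measure_eq_zero_iff_ae_notMem.2 (ae_notMem_exceptionalSet hkP hkD hRd R)

end ExceptionalSet

theorem attitude_pd_quasi_global_asymptotic_stability_general
    (kP kD : ℝ) (hkP : 0 < kP) (hkD : 0 < kD)
    (Rd : M3) (hRd : Rd ∈ SO3) :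
    (∀ U ∈ 𝓝 ((Rd, 0) : M3 × V3), ∃ V ∈ 𝓝 ((Rd, 0) : M3 × V3),
      ∀ (R : ℝ → M3) (ω : ℝ → V3), IsClosedLoopSolution kP kD Rd R ω →
        R 0 ∈ SO3 → (R 0, ω 0) ∈ V → ∀ t : ℝ, 0 ≤ t → (R t, ω t) ∈ U) ∧
    (∃ N : Set (M3 × V3), N ⊆ SO3 ×ˢ Set.univ ∧ IsClosed N ∧ interior N = ∅ ∧
      (∀ μ : Measure M3, μ.prod volume N = 0) ∧
      ∀ (R : ℝ → M3) (ω : ℝ → V3), IsClosedLoopSolution kP kD Rd R ω →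
        R 0 ∈ SO3 → (R 0, ω 0) ∉ N →
        Tendsto R atTop (𝓝 Rd) ∧ Tendsto ω atTop (𝓝 (0 : V3))) := by
  refine ⟨fun U hU => closedLoop_lyapunov_stable hkP hkD hRd hU, exceptionalSet kP kD Rd,
    fun x hx => ⟨hx.1, Set.mem_univ _⟩, isClosed_exceptionalSet hkP hkD,
    interior_eq_empty_of_forall_ae_notMem volume (ae_notMem_exceptionalSet hkP hkD hRd),
    prod_exceptionalSet hkP hkD hRd, fun R ω h h₀ hN => ?_⟩
  have hlim := h.tendsto_nhds hRd hkP hkD h₀ fun hw => hN ⟨h₀, hw⟩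
  exact ⟨hlim.fst_nhds, hlim.snd_nhds⟩

/-- Quasi-global asymptotic stability of the attitude PD control law on SO(3) × ℝ³ for a
constant desired attitude `R_d` with `ω_d = 0`: (i) the equilibrium `(R_d, 0)` is
Lyapunov stable, and (ii) there is a closed set `N ⊆ SO(3) × ℝ³` with empty interior and
measure zero with respect to the product of the Haar measure on SO(3) and the Lebesgue
measure on ℝ³, such that every closed-loop solution starting outside `N` converges to
`(R_d, 0)`. -/
theorem attitude_pd_quasi_global_asymptotic_stability
    (kP kD : ℝ) (hkP : 0 < kP) (hkD : 0 < kD)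
    (Rd : M3) (hRd : Rd ∈ SO3) :
    (∀ U ∈ 𝓝 ((Rd, 0) : M3 × V3), ∃ V ∈ 𝓝 ((Rd, 0) : M3 × V3),
      ∀ (R : ℝ → M3) (ω : ℝ → V3), IsClosedLoopSolution kP kD Rd R ω →
        R 0 ∈ SO3 → (R 0, ω 0) ∈ V → ∀ t : ℝ, 0 ≤ t → (R t, ω t) ∈ U) ∧
    (∃ N : Set (M3 × V3), N ⊆ SO3 ×ˢ Set.univ ∧ IsClosed N ∧ interior N = ∅ ∧
      (∀ μ : Measure M3, IsHaarOnSO3 μ → μ.prod volume N = 0) ∧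
      ∀ (R : ℝ → M3) (ω : ℝ → V3), IsClosedLoopSolution kP kD Rd R ω →
        R 0 ∈ SO3 → (R 0, ω 0) ∉ N →
        Tendsto R atTop (𝓝 Rd) ∧ Tendsto ω atTop (𝓝 (0 : V3))) := by
  obtain ⟨hstable, N, hsub, hclosed, hinterior, hnull, hconv⟩ :=
    attitude_pd_quasi_global_asymptotic_stability_general kP kD hkP hkD Rd hRd
  exact ⟨hstable, N, hsub, hclosed, hinterior, fun μ _ => hnull μ, hconv⟩
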